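/- Let X, Y be Banach spaces and f : X → Y Fréchet differentiable, coercive (‖x_n‖ → ∞ implies ‖f(x_n)‖ → ∞), with f'(x) invertible for every x, x ↦ (f'(x))⁻¹ locally Lipschitz, and sup_{x∈P} ‖(f'(x))⁻¹‖ < ∞ for every closed bounded P ⊆ X. Then f is surjective and admits a continuous right inverse ψ : Y → X with f ∘ ψ = id_Y. -/

import Mathlib

/-!
Lifting the segments `[f 0, y]` through the local homeomorphism `f`, starting at `0`, yields a
section of `f` that is continuous in `y`; by uniqueness of lifts on the connected space `X` it is
also a left inverse, so `f` is a homeomorphism. The only obstruction to lifting a segment is that a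
partial lift fails to converge at the end of its interval. But a partial lift `g` satisfies
`g' = f'(g)⁻¹ (y - f 0)`, and it stays where `f` is bounded, which for coercive `f` is a bounded
set. So `f'⁻¹` is bounded along `g`, `g` is Lipschitz, and it converges because `X` is complete.
-/

open Set Filter Topology
open scoped unitInterval

/-- `IsLiftOn p γ g s` says that, on the set `s`, `g` is a continuous lift of `γ` through `p`. The
values of `g` outside `s` are irrelevant, so that partial lifts are ordinary functions. -/
structure IsLiftOn {T E B : Type*} [TopologicalSpace T] [TopologicalSpace E]
    (p : E → B) (γ : T → B) (g : T → E) (s : Set T) : Prop where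
  continuousOn : ContinuousOn g s
  map_eq : ∀ t ∈ s, p (g t) = γ t

namespace IsLiftOn

section General

variable {T E B : Type*} [TopologicalSpace T] [TopologicalSpace E] {p : E → B} {γ : T → B}
  {g g₁ g₂ : T → E} {s t : Set T}

theorem mono (h : IsLiftOn p γ g s) (hts : t ⊆ s) : IsLiftOn p γ g t :=
  ⟨h.continuousOn.mono hts, fun u hu ↦ h.map_eq u (hts hu)⟩

theorem congr (h : IsLiftOn p γ g₁ s) (heq : EqOn g₂ g₁ s) : IsLiftOn p γ g₂ s :=
  ⟨h.continuousOn.congr heq, fun u hu ↦ (congrArg p (heq hu)).trans (h.map_eq u hu)⟩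

theorem union_of_isClosed (hs : IsLiftOn p γ g s) (ht : IsLiftOn p γ g t) (hsc : IsClosed s)
    (htc : IsClosed t) : IsLiftOn p γ g (s ∪ t) :=
  ⟨hs.continuousOn.union_of_isClosed ht.continuousOn hsc htc,
    fun u hu ↦ hu.elim (hs.map_eq u) (ht.map_eq u)⟩

theorem eqOn (hsep : IsSeparatedMap p) (hp : IsLocallyInjective p)
    (h₁ : IsLiftOn p γ g₁ s) (h₂ : IsLiftOn p γ g₂ s) (hs : IsPreconnected s) {a : T}
    (ha : a ∈ s) (heq : g₁ a = g₂ a) : EqOn g₁ g₂ s :=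
  hsep.eqOn_of_comp_eqOn hp hs h₁.continuousOn h₂.continuousOn
    (fun u hu ↦ (h₁.map_eq u hu).trans (h₂.map_eq u hu).symm) ha heq

theorem exists_mem_nhds [TopologicalSpace B] (hp : IsLocalHomeomorph p)
    (hγ : Continuous γ) {a : T} {e : E} (he : p e = γ a) :
    ∃ s ∈ 𝓝 a, ∃ g, IsLiftOn p γ g s ∧ g a = e := by
  obtain ⟨q, heq, rfl⟩ := hp e
  have ha : γ a ∈ q.target := he ▸ q.map_source heq
  refine ⟨γ ⁻¹' q.target, (q.open_target.preimage hγ).mem_nhds ha, q.symm ∘ γ,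
    ⟨q.continuousOn_symm.comp hγ.continuousOn fun _ ht ↦ ht, fun _ ht ↦ q.right_inv ht⟩, ?_⟩
  rw [Function.comp_apply, ← he, q.left_inv heq]

end General

section LinearOrder

variable {T E B : Type*} [LinearOrder T] [TopologicalSpace T] [OrderTopology T]
  [TopologicalSpace E] {p : E → B} {γ : T → B} {g g₁ g₂ : T → E} {a b c : T}

theorem ite_Icc (h₁ : IsLiftOn p γ g₁ (Icc a b)) (h₂ : IsLiftOn p γ g₂ (Icc b c)) (hab : a ≤ b)
    (hbc : b ≤ c) (heq : g₁ b = g₂ b) :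
    IsLiftOn p γ (fun t ↦ if t ≤ b then g₁ t else g₂ t) (Icc a c) := by
  rw [← Icc_union_Icc_eq_Icc hab hbc]
  refine (h₁.congr fun t ht ↦ if_pos ht.2).union_of_isClosed (h₂.congr fun t ht ↦ ?_)
    isClosed_Icc isClosed_Icc
  rcases ht.1.eq_or_lt with rfl | hbt
  · simpa using heq
  · exact if_neg hbt.not_ge

theorem update_Icc [DenselyOrdered T] [TopologicalSpace B] [T2Space B] (hp : Continuous p)
    (hγ : Continuous γ) (h : IsLiftOn p γ g (Ico a b)) (hab : a < b) {e : E}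
    (hg : Tendsto g (𝓝[<] b) (𝓝 e)) : IsLiftOn p γ (Function.update g b e) (Icc a b) := by
  rw [← nhdsWithin_Ico_eq_nhdsLT hab] at hg
  have : (𝓝[Ico a b] b).NeBot := right_nhdsWithin_Ico_neBot hab
  have hpe : p e = γ b :=
    tendsto_nhds_unique_of_eventuallyEq ((hp.tendsto e).comp hg) hγ.continuousWithinAt
      (eventually_mem_nhdsWithin.mono h.map_eq)
  constructor
  · rw [continuousOn_update_iff, Icc_sdiff_right]
    exact ⟨h.continuousOn, fun _ ↦ hg⟩
  · intro t ht
    rcases ht.2.eq_or_lt with rfl | htb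
    · rwa [Function.update_self]
    · rw [Function.update_of_ne htb.ne]
      exact h.map_eq t ⟨ht.1, htb⟩

theorem exists_extend_right [DenselyOrdered T] [TopologicalSpace B]
    (hp : IsLocalHomeomorph p) (hγ : Continuous γ) (hg : IsLiftOn p γ g (Icc a b)) (hab : a ≤ b)
    (hbc : b < c) : ∃ d ∈ Ioc b c, ∃ g', IsLiftOn p γ g' (Icc a d) ∧ g' a = g a := by
  obtain ⟨s, hs, g', hg', hgb⟩ := exists_mem_nhds hp hγ (hg.map_eq b (right_mem_Icc.2 hab))
  obtain ⟨u, hu, hus⟩ := (mem_nhdsGE_iff_exists_mem_Ioc_Ico_subset hbc).1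
    (mem_nhdsWithin_of_mem_nhds hs)
  obtain ⟨d, hbd, hdu⟩ := exists_between hu.1
  have hg'_Icc : IsLiftOn p γ g' (Icc b d) :=
    hg'.mono fun t ht ↦ hus ⟨ht.1, ht.2.trans_lt hdu⟩
  exact ⟨d, ⟨hbd, hdu.le.trans hu.2⟩, _, hg.ite_Icc hg'_Icc hab hbd.le hgb.symm, if_pos hab⟩

end LinearOrder

end IsLiftOn

section Continuation

variable {T E B : Type*} [ConditionallyCompleteLinearOrder T] [TopologicalSpace T]
  [OrderTopology T] [DenselyOrdered T] [TopologicalSpace E]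
  {p : E → B} {γ : T → B} {a b : T} {e : E}

theorem exists_isLiftOn_Ico (hsep : IsSeparatedMap p) (hp : IsLocallyInjective p) (hab : a < b)
    (h : ∀ c ∈ Ico a b, ∃ g, IsLiftOn p γ g (Icc a c) ∧ g a = e) :
    ∃ g, IsLiftOn p γ g (Ico a b) ∧ g a = e := by
  have : Nonempty E := ⟨e⟩
  choose! g hg hga using h
  have hcoh {c d : T} (hc : a ≤ c) (hcd : c ≤ d) (hd : d < b) : g c c = g d c :=
    (hg c ⟨hc, hcd.trans_lt hd⟩).eqOn hsep hp
      ((hg d ⟨hc.trans hcd, hd⟩).mono (Icc_subset_Icc_right hcd)) isPreconnected_Icc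
      (left_mem_Icc.2 hc) ((hga c ⟨hc, hcd.trans_lt hd⟩).trans (hga d ⟨hc.trans hcd, hd⟩).symm)
      (right_mem_Icc.2 hc)
  refine ⟨fun c ↦ g c c, ⟨continuousOn_of_locally_continuousOn fun c hc ↦ ?_,
    fun c hc ↦ (hg c hc).map_eq c (right_mem_Icc.2 hc.1)⟩, hga a (left_mem_Ico.2 hab)⟩
  obtain ⟨d, hcd, hdb⟩ := exists_between hc.2
  have hd : d ∈ Ico a b := ⟨hc.1.trans hcd.le, hdb⟩
  refine ⟨Iio d, isOpen_Iio, hcd, ?_⟩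
  exact ((hg d hd).continuousOn.mono fun t ht ↦ ⟨ht.1.1, ht.2.le⟩).congr
    fun t ht ↦ hcoh ht.1.1 ht.2.le hdb

theorem exists_isLiftOn_Icc [TopologicalSpace B] [T2Space B] (hsep : IsSeparatedMap p)
    (hp : IsLocalHomeomorph p) (hγ : Continuous γ) (hab : a ≤ b) (he : p e = γ a)
    (hlim : ∀ c ∈ Ioc a b, ∀ g, IsLiftOn p γ g (Ico a c) → g a = e →
      ∃ l, Tendsto g (𝓝[<] c) (𝓝 l)) :
    ∃ g, IsLiftOn p γ g (Icc a b) ∧ g a = e := by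
  let S : Set T := {c | ∃ g, IsLiftOn p γ g (Icc a c) ∧ g a = e}
  have hSa : a ∈ S := by
    refine ⟨fun _ ↦ e, ⟨continuousOn_const, fun t ht ↦ ?_⟩, rfl⟩
    rwa [show t = a from le_antisymm ht.2 ht.1]
  have hS_closed : IsClosed (S ∩ Icc a b) := by
    refine isClosed_of_closure_subset fun c hc ↦ ?_
    have hc_mem : c ∈ Icc a b := closure_minimal inter_subset_right isClosed_Icc hc
    refine ⟨?_, hc_mem⟩
    rcases hc_mem.1.eq_or_lt with rfl | hac
    · exact hSa
    have hS_below : ∀ d ∈ Ico a c, d ∈ S := fun d hd ↦ by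
      obtain ⟨u, hdu, ⟨g, hg, hga⟩, -⟩ := mem_closure_iff.1 hc (Ioi d) isOpen_Ioi hd.2
      exact ⟨g, hg.mono (Icc_subset_Icc_right (le_of_lt hdu)), hga⟩
    obtain ⟨g, hg, hga⟩ := exists_isLiftOn_Ico hsep hp.isLocallyInjective hac hS_below
    obtain ⟨l, hl⟩ := hlim c ⟨hac, hc_mem.2⟩ g hg hga
    exact ⟨_, hg.update_Icc hp.continuous hγ hac hl, by rwa [Function.update_of_ne hac.ne]⟩
  refine hS_closed.Icc_subset_of_forall_exists_gt hSa ?_ (right_mem_Icc.2 hab)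
  rintro c ⟨⟨g, hg, hga⟩, hc⟩ u hu
  obtain ⟨d, hd, g', hg', hga'⟩ := hg.exists_extend_right hp hγ hc.1 hu
  exact ⟨d, ⟨g', hg', hga'.trans hga⟩, hd⟩

end Continuation

theorem isHomeomorph_of_exists_isLiftOn_lineMap {E V : Type*} [TopologicalSpace E]
    [PreconnectedSpace E] [AddCommGroup V] [Module ℝ V] [TopologicalSpace V]
    [IsTopologicalAddGroup V] [ContinuousSMul ℝ V] {p : E → V} (hsep : IsSeparatedMap p)
    (hp : IsLocalHomeomorph p) (e : E)
    (hlift : ∀ v, ∃ g, IsLiftOn p (AffineMap.lineMap (p e) v) g (Icc (0 : ℝ) 1) ∧ g 0 = e) :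
    IsHomeomorph p := by
  choose g hg hg0 using hlift
  have hg_cont : Continuous fun z : I × V ↦ g z.2 z.1 :=
    hp.continuous_lift hsep
      ⟨fun z : I × V ↦ AffineMap.lineMap (p e) z.2 (z.1 : ℝ), by
        simp only [AffineMap.lineMap_apply_module']; fun_prop⟩
      (funext fun z ↦ (hg z.2).map_eq z.1 z.1.2) (by simpa [hg0] using continuous_const)
      fun v ↦ (hg v).continuousOn.comp_continuous continuous_subtype_val Subtype.prop
  have hψ_cont : Continuous fun v ↦ g v 1 := hg_cont.comp (Continuous.prodMk_right (1 : I))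
  have hψ_right (v : V) : p (g v 1) = v := by
    simpa using (hg v).map_eq 1 (right_mem_Icc.2 zero_le_one)
  have hψe : g (p e) 1 = e :=
    (hg (p e)).eqOn hsep hp.isLocallyInjective ⟨continuousOn_const, by simp⟩ isPreconnected_Icc
      (left_mem_Icc.2 zero_le_one) (hg0 (p e)) (right_mem_Icc.2 zero_le_one)
  have hψ_left : (fun v ↦ g v 1) ∘ p = id :=
    hsep.eq_of_comp_eq hp.isLocallyInjective (hψ_cont.comp hp.continuous) continuous_id
      (funext fun x ↦ hψ_right (p x)) e hψe
  exact isHomeomorph_iff_exists_inverse.2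
    ⟨hp.continuous, fun v ↦ g v 1, congrFun hψ_left, hψ_right, hψ_cont⟩

theorem exists_tendsto_nhdsLT_of_norm_hasDerivWithinAt_le {X : Type*} [NormedAddCommGroup X]
    [NormedSpace ℝ X] [CompleteSpace X] {g g' : ℝ → X} {a b C : ℝ} (hab : a < b)
    (hg : ∀ t ∈ Ico a b, HasDerivWithinAt g (g' t) (Ico a b) t)
    (hC : ∀ t ∈ Ico a b, ‖g' t‖ ≤ C) : ∃ l, Tendsto g (𝓝[<] b) (𝓝 l) := by
  have hLip : LipschitzOnWith C.toNNReal g (Ico a b) :=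
    (convex_Ico a b).lipschitzOnWith_of_nnnorm_hasDerivWithin_le hg fun t ht ↦
      (Real.toNNReal_le_toNNReal (hC t ht)).trans' (by simp)
  rw [← nhdsWithin_Ico_eq_nhdsLT hab]
  have : (𝓝[Ico a b] b).NeBot := right_nhdsWithin_Ico_neBot hab
  exact cauchy_map_iff_exists_tendsto.1 <| (cauchy_nhds.mono nhdsWithin_le_nhds).map_of_le
    hLip.uniformContinuousOn (le_principal_iff.2 self_mem_nhdsWithin)

section InverseFunction

variable {𝕜 X Y : Type*} [NontriviallyNormedField 𝕜] [NormedAddCommGroup X] [NormedSpace 𝕜 X]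
  [CompleteSpace X] [NormedAddCommGroup Y] [NormedSpace 𝕜 Y]

theorem continuous_coe_of_continuous_coe_symm {T : Type*} [TopologicalSpace T]
    {A : T → X ≃L[𝕜] Y} (hA : Continuous fun t ↦ ((A t).symm : Y →L[𝕜] X)) :
    Continuous fun t ↦ (A t : X →L[𝕜] Y) := by
  refine continuous_iff_continuousAt.2 fun t ↦ ?_
  have : CompleteSpace Y :=
    (completeSpace_congr (e := (A t).toEquiv) (A t).isUniformEmbedding).1 ‹_›
  have hinverse : ContinuousAt (fun u ↦ ((A u).symm : Y →L[𝕜] X).inverse) t :=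
    (contDiffAt_map_inverse (n := 0) (A t).symm).continuousAt.comp
      (f := fun u ↦ ((A u).symm : Y →L[𝕜] X)) hA.continuousAt
  simpa only [ContinuousLinearMap.inverse_equiv, ContinuousLinearEquiv.symm_symm] using hinverse

theorem isLocalHomeomorph_of_hasStrictFDerivAt {f : X → Y} {A : X → X ≃L[𝕜] Y}
    (hf : ∀ x, HasStrictFDerivAt f (A x : X →L[𝕜] Y) x) : IsLocalHomeomorph f :=
  fun x ↦ ⟨(hf x).toOpenPartialHomeomorph f, (hf x).mem_toOpenPartialHomeomorph_source, rfl⟩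

theorem IsLiftOn.hasDerivWithinAt {f : X → Y} {A : X ≃L[𝕜] Y} {γ : 𝕜 → Y} {v : Y} {g : 𝕜 → X}
    {s : Set 𝕜} {t : 𝕜} (hg : IsLiftOn f γ g s)
    (hf : HasStrictFDerivAt f (A : X →L[𝕜] Y) (g t)) (hγ : HasDerivWithinAt γ v s t)
    (ht : t ∈ s) : HasDerivWithinAt g (A.symm v) s t := by
  have hinv := hf.to_localInverse.hasFDerivAt
  rw [hg.map_eq t ht] at hinv
  refine (hinv.comp_hasDerivWithinAt t hγ).congr_of_eventuallyEq_of_mem ?_ ht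
  filter_upwards [(hg.continuousOn t ht).eventually hf.eventually_left_inverse,
    self_mem_nhdsWithin] with u hu hus
  rw [Function.comp_apply, ← hg.map_eq u hus, hu]

end InverseFunction

theorem exists_isLiftOn_Icc_of_norm_symm_deriv_le {X Y : Type*} [NormedAddCommGroup X]
    [NormedSpace ℝ X] [CompleteSpace X] [NormedAddCommGroup Y] [NormedSpace ℝ Y] {f : X → Y}
    {A : X → X ≃L[ℝ] Y} (hf : ∀ x, HasStrictFDerivAt f (A x : X →L[ℝ] Y) x) {γ γ' : ℝ → Y}
    (hγ : ∀ t, HasDerivAt γ (γ' t) t) {a b C : ℝ} (hab : a ≤ b)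
    (hC : ∀ t ∈ Ico a b, ∀ x, f x = γ t → ‖(A x).symm (γ' t)‖ ≤ C) {x₀ : X} (hx₀ : f x₀ = γ a) :
    ∃ g, IsLiftOn f γ g (Icc a b) ∧ g a = x₀ := by
  refine exists_isLiftOn_Icc (T2Space.isSeparatedMap f) (isLocalHomeomorph_of_hasStrictFDerivAt hf)
    (continuous_iff_continuousAt.2 fun t ↦ (hγ t).continuousAt) hab hx₀ fun c hc g hg _ ↦ ?_
  exact exists_tendsto_nhdsLT_of_norm_hasDerivWithinAt_le hc.1
    (fun t ht ↦ hg.hasDerivWithinAt (hf (g t)) (hγ t).hasDerivWithinAt ht)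
    fun t ht ↦ hC t ⟨ht.1, ht.2.trans_le hc.2⟩ (g t) (hg.map_eq t ht)

theorem isBounded_sublevel_of_coercive {X : Type*} [SeminormedAddGroup X] {φ : X → ℝ}
    (hφ : ∀ x : ℕ → X, Tendsto (fun n ↦ ‖x n‖) atTop atTop →
      Tendsto (fun n ↦ φ (x n)) atTop atTop) (r : ℝ) :
    Bornology.IsBounded {x | φ x ≤ r} := by
  rw [isBounded_iff_forall_norm_le]
  by_contra! h
  choose x hxr hx using fun n : ℕ ↦ h n
  have hx_atTop : Tendsto (fun n ↦ ‖x n‖) atTop atTop :=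
    tendsto_atTop_mono (fun n ↦ (hx n).le) tendsto_natCast_atTop_atTop
  obtain ⟨n, hn⟩ := ((hφ x hx_atTop).eventually_gt_atTop r).exists
  exact hn.not_ge (hxr n)

theorem global_inverse_coercive_general {X Y : Type*} [NormedAddCommGroup X] [NormedSpace ℝ X]
    [CompleteSpace X] [NormedAddCommGroup Y] [NormedSpace ℝ Y] {f : X → Y} {f' : X → X →L[ℝ] Y}
    {finv : X → Y →L[ℝ] X} (hf' : ∀ x, HasFDerivAt f (f' x) x)
    (hinv : ∀ x, (f' x).comp (finv x) = ContinuousLinearMap.id ℝ Y ∧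
      (finv x).comp (f' x) = ContinuousLinearMap.id ℝ X)
    (hcont : Continuous finv) (hbdd : ∀ r : ℝ, ∃ M : ℝ, ∀ x, ‖f x‖ ≤ r → ‖finv x‖ ≤ M) :
    IsHomeomorph f := by
  let A (x : X) : X ≃L[ℝ] Y := .equivOfInverse' (f' x) (finv x) (hinv x).1 (hinv x).2
  have hf'_cont : Continuous f' := continuous_coe_of_continuous_coe_symm (A := A) hcont
  have hf : ∀ x, HasStrictFDerivAt f (A x : X →L[ℝ] Y) x := fun x ↦
    hasStrictFDerivAt_of_hasFDerivAt_of_continuousAt (.of_forall hf') hf'_cont.continuousAt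
  refine isHomeomorph_of_exists_isLiftOn_lineMap (T2Space.isSeparatedMap f)
    (isLocalHomeomorph_of_hasStrictFDerivAt hf) 0 fun y ↦ ?_
  obtain ⟨M, hM⟩ := hbdd (max ‖f 0‖ ‖y‖)
  refine exists_isLiftOn_Icc_of_norm_symm_deriv_le (C := M * ‖y - f 0‖) hf
    (fun _ ↦ AffineMap.hasDerivAt_lineMap) zero_le_one (fun t ht x hx ↦ ?_) (by simp)
  refine (finv x).le_of_opNorm_le (hM x ?_) (y - f 0)
  rw [hx]
  exact (convexOn_norm convex_univ).le_max_of_mem_segment (mem_univ _) (mem_univ _)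
    (lineMap_mem_segment ℝ _ _ (Ico_subset_Icc_self ht))

theorem global_inverse_coercive
    {X Y : Type*} [NormedAddCommGroup X] [NormedSpace ℝ X] [CompleteSpace X]
    [NormedAddCommGroup Y] [NormedSpace ℝ Y] [CompleteSpace Y]
    (f : X → Y) (f' : X → (X →L[ℝ] Y)) (finv : X → (Y →L[ℝ] X))
    (hf' : ∀ x : X, HasFDerivAt f (f' x) x)
    (hinv : ∀ x : X,
      (f' x).comp (finv x) = ContinuousLinearMap.id ℝ Y ∧
      (finv x).comp (f' x) = ContinuousLinearMap.id ℝ X)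
    (hlip : LocallyLipschitz finv)
    (hcoercive : ∀ xn : ℕ → X,
      Filter.Tendsto (fun n => ‖xn n‖) Filter.atTop Filter.atTop →
      Filter.Tendsto (fun n => ‖f (xn n)‖) Filter.atTop Filter.atTop)
    (hbdd : ∀ P : Set X, IsClosed P → Bornology.IsBounded P →
      ∃ M : ℝ, ∀ x ∈ P, ‖finv x‖ ≤ M) :
    Function.Surjective f ∧
      ∃ ψ : Y → X, Continuous ψ ∧ ∀ y : Y, f (ψ y) = y := by
  have h := global_inverse_coercive_general hf' hinv hlip.continuous fun r ↦
    (hbdd _ isClosed_closure (isBounded_sublevel_of_coercive hcoercive r).closure).imp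
      fun _ hM x hx ↦ hM x (subset_closure hx)
  exact ⟨h.surjective, (h.homeomorph f).symm, (h.homeomorph f).symm.continuous,
    (h.homeomorph f).apply_symm_apply⟩
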